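/- arXiv:1904.09055 — 2 statements merged into one kernel-verified Lean document; each statement's English description precedes it below -/
import Mathlib

section
/- Let R be a commutative ring, let {A_k, f_k} be an inverse system of cochain complexes of R-modules with limit A_∞ (with structure maps f̃_k : A_∞ → A_k), and let B be a cochain complex of R-modules that is bounded below, i.e. B^i = 0 for all i < m for some m ∈ ℤ. Then B ⊗ A_∞, together with the maps id_B ⊗ f̃_k : B ⊗ A_∞ → B ⊗ A_k, is a limit of the inverse system {B ⊗ A_k, id_B ⊗ f_k}; in particular lim (B ⊗ A_k) ≃ B ⊗ A_∞, i.e. the limiting process commutes with the tensor product. -/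
open CategoryTheory CategoryTheory.Limits MonoidalCategory

/-- Cochain complexes of `R`-modules, with differential of degree `+1`. -/
abbrev Cx (R : Type) [Ring R] := CochainComplex (ModuleCat R) ℤ

/-- `homOrderGE f d` says that the homological order `|f|_h` is at least `d`:
there is a complex `C`, chain homotopy equivalent to the mapping cone of `f`,
which vanishes in all degrees `< d`. -/
def homOrderGE {R : Type} [Ring R] {A B : Cx R} (f : A ⟶ B) (d : ℤ) : Prop :=
  ∃ C : Cx R, Nonempty (HomotopyEquiv (CochainComplex.mappingCone f) C) ∧
    ∀ i : ℤ, i < d → IsZero (C.X i)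

/-- `(L, ft)` is a limit of the inverse system `{A_k, f_k}`:
the maps `ft k : L ⟶ A k` are compatible with the system maps and
`|ft k|_h → ∞` as `k → ∞`. -/
def IsSystemLimit {R : Type} [Ring R] (A : ℕ → Cx R) (f : ∀ k : ℕ, A (k + 1) ⟶ A k)
    (L : Cx R) (ft : ∀ k : ℕ, L ⟶ A k) : Prop :=
  (∀ k : ℕ, ft (k + 1) ≫ f k = ft k) ∧
  (∀ d : ℤ, ∃ N : ℕ, ∀ k : ℕ, N ≤ k → homOrderGE (ft k) d)

section Monoidal

variable {R : Type} [CommRing R]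

instance (X : ModuleCat R) : PreservesColimitsOfSize.{0, 0} ((curriedTensor (ModuleCat R)).obj X) :=
  inferInstanceAs (PreservesColimitsOfSize.{0, 0} (tensorLeft X))

noncomputable instance (X : ModuleCat R) :
    PreservesColimitsOfSize.{0, 0} ((curriedTensor (ModuleCat R)).flip.obj X) :=
  preservesColimits_of_natIso
    (NatIso.ofComponents (fun Y => β_ X Y) (by intros; simp) :
      tensorLeft X ≅ (curriedTensor (ModuleCat R)).flip.obj X)

instance : (curriedTensor (ModuleCat R)).Additive where
  map_add := by
    intros
    ext Z
    simp [curriedTensor, MonoidalPreadditive.add_whiskerRight]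

set_option synthInstance.maxHeartbeats 1000000
set_option maxHeartbeats 1000000

section WL

open CochainComplex HomComplex HomologicalComplex

variable {C₁ C₂ D : Type*} [Category* C₁] [Category* C₂] [Category* D]
  [Preadditive C₁] [Preadditive C₂] [Preadditive D]
  (F : C₁ ⥤ C₂ ⥤ D) [F.Additive] [∀ X, (F.obj X).Additive]
  (B : CochainComplex C₁ ℤ) {K L M : CochainComplex C₂ ℤ}
  [HasMapBifunctor B K F (ComplexShape.up ℤ)] [HasMapBifunctor B L F (ComplexShape.up ℤ)]
  [HasMapBifunctor B M F (ComplexShape.up ℤ)]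

/-- The tensor product of the identity of `B` and a cochain. -/
noncomputable def wl {n : ℤ} (γ : Cochain K L n) :
    Cochain (mapBifunctor B K F (ComplexShape.up ℤ)) (mapBifunctor B L F (ComplexShape.up ℤ)) n :=
  Cochain.mk fun p q hpq => mapBifunctorDesc fun i₁ i₂ h =>
    (n * i₁).negOnePow • ((F.obj (B.X i₁)).map (γ.v i₂ (i₂ + n) rfl) ≫
      ιMapBifunctor B L F (ComplexShape.up ℤ) i₁ (i₂ + n) q
        (by dsimp at h ⊢; omega))

lemma ι_wl {n : ℤ} (γ : Cochain K L n) (p q : ℤ) (hpq : p + n = q) (i₁ i₂ j₂ : ℤ)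
    (h : i₁ + i₂ = p) (hj : i₂ + n = j₂) (h' : i₁ + j₂ = q) :
    ιMapBifunctor B K F (ComplexShape.up ℤ) i₁ i₂ p h ≫ (wl F B γ).v p q hpq =
    (n * i₁).negOnePow • ((F.obj (B.X i₁)).map (γ.v i₂ j₂ hj) ≫
      ιMapBifunctor B L F (ComplexShape.up ℤ) i₁ j₂ q h') := by
  subst hj
  simp [wl]

lemma wl_add {n : ℤ} (γ γ' : Cochain K L n) : wl F B (γ + γ') = wl F B γ + wl F B γ' := by
  ext p q hpq : 1
  apply mapBifunctor.hom_ext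
  intro i₁ i₂ h
  have h' : i₁ + i₂ = p := h
  rw [Cochain.add_v, Preadditive.comp_add, ι_wl F B _ p q hpq i₁ i₂ _ h' rfl (by omega),
    ι_wl F B _ p q hpq i₁ i₂ _ h' rfl (by omega), ι_wl F B _ p q hpq i₁ i₂ _ h' rfl (by omega)]
  simp

lemma wl_zero {n : ℤ} : wl F B (0 : Cochain K L n) = 0 := by
  simpa using wl_add F B (0 : Cochain K L n) 0

lemma wl_neg {n : ℤ} (γ : Cochain K L n) : wl F B (-γ) = - wl F B γ := by
  rw [eq_neg_iff_add_eq_zero, ← wl_add, neg_add_cancel, wl_zero]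

lemma wl_comp {n m k : ℤ} (γ : Cochain K L n) (γ' : Cochain L M m) (hk : n + m = k) :
    wl F B (γ.comp γ' hk) = (wl F B γ).comp (wl F B γ') hk := by
  ext p q hpq : 1
  apply mapBifunctor.hom_ext
  intro i₁ i₂ h
  have h' : i₁ + i₂ = p := h
  rw [ι_wl F B _ p q hpq i₁ i₂ (i₂ + k) h' rfl (by omega),
    Cochain.comp_v _ _ hk i₂ (i₂ + n) (i₂ + k) rfl (by omega),
    Cochain.comp_v _ _ hk p (p + n) q rfl (by omega), ← Category.assoc,
    ι_wl F B _ p (p + n) rfl i₁ i₂ (i₂ + n) h' rfl (by omega),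
    Linear.units_smul_comp, Category.assoc,
    ι_wl F B γ' (p + n) q (by omega) i₁ (i₂ + n) (i₂ + k) (by omega) (by omega) (by omega),
    Linear.comp_units_smul, smul_smul, ← Int.negOnePow_add]
  obtain rfl := hk
  simp [add_mul]

lemma wl_ofHom (f : K ⟶ L) : wl F B (Cochain.ofHom f) =
    Cochain.ofHom (mapBifunctorMap (𝟙 B) f F (ComplexShape.up ℤ)) := by
  ext p : 1
  apply mapBifunctor.hom_ext
  intro i₁ i₂ h
  have h' : i₁ + i₂ = p := h
  rw [ι_wl F B _ p p (add_zero p) i₁ i₂ i₂ h' (add_zero _) h']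
  simp

lemma wl_mapId : mapBifunctorMap (𝟙 B) (𝟙 K) F (ComplexShape.up ℤ) = 𝟙 _ := by
  ext n : 1
  apply mapBifunctor.hom_ext
  intro i₁ i₂ h
  simp

lemma ι_tot_d (p q : ℤ) (i₁ i₂ j₁ j₂ : ℤ) (h : i₁ + i₂ = p)
    (h₁ : i₁ + 1 = j₁) (h₂ : i₂ + 1 = j₂) (h₁' : j₁ + i₂ = q) (h₂' : i₁ + j₂ = q) :
    ιMapBifunctor B K F (ComplexShape.up ℤ) i₁ i₂ p h ≫
      (mapBifunctor B K F (ComplexShape.up ℤ)).d p q =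
    (F.map (B.d i₁ j₁)).app (K.X i₂) ≫ ιMapBifunctor B K F (ComplexShape.up ℤ) j₁ i₂ q h₁' +
    i₁.negOnePow • ((F.obj (B.X i₁)).map (K.d i₂ j₂) ≫
      ιMapBifunctor B K F (ComplexShape.up ℤ) i₁ j₂ q h₂') := by
  rw [mapBifunctor.d_eq, Preadditive.comp_add, mapBifunctor.ι_D₁, mapBifunctor.ι_D₂,
    mapBifunctor.d₁_eq _ _ _ _ (show (ComplexShape.up ℤ).Rel i₁ j₁ from h₁) _ _ h₁',
    mapBifunctor.d₂_eq _ _ _ _ _ (show (ComplexShape.up ℤ).Rel i₂ j₂ from h₂) _ h₂']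
  simp

lemma wl_δ {n m : ℤ} (hm : n + 1 = m) (γ : Cochain K L n) :
    δ n m (wl F B γ) = wl F B (δ n m γ) := by
  ext p q hpq : 1
  apply mapBifunctor.hom_ext
  intro i₁ i₂ h
  have h' : i₁ + i₂ = p := h
  rw [ι_wl F B _ p q hpq i₁ i₂ (i₂ + m) h' rfl (by omega),
    δ_v n m hm _ p q hpq (p + n) (p + 1) (by omega) rfl,
    δ_v n m hm _ i₂ (i₂ + m) rfl (i₂ + n) (i₂ + 1) (by omega) rfl,
    Preadditive.comp_add, Linear.comp_units_smul, ← Category.assoc, ← Category.assoc,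
    ι_wl F B _ p (p + n) rfl i₁ i₂ (i₂ + n) h' rfl (by omega),
    ι_tot_d F B p (p + 1) i₁ i₂ (i₁ + 1) (i₂ + 1) h' rfl rfl (by omega) (by omega),
    Linear.units_smul_comp, Category.assoc,
    ι_tot_d F B (p + n) q i₁ (i₂ + n) (i₁ + 1) (i₂ + m) (by omega) rfl (by omega)
      (by omega) (by omega), Preadditive.add_comp, Linear.units_smul_comp,
    Category.assoc, Category.assoc,
    ι_wl F B γ (p + 1) q (by omega) (i₁ + 1) i₂ (i₂ + n) (by omega) rfl (by omega),
    ι_wl F B γ (p + 1) q (by omega) i₁ (i₂ + 1) (i₂ + m) (by omega) (by omega) (by omega)]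
  subst hm
  simp only [Preadditive.comp_add, Linear.comp_units_smul, smul_add, smul_smul,
    NatTrans.naturality_assoc, Functor.map_add, Functor.map_comp, Functor.map_units_smul,
    Preadditive.add_comp, Linear.units_smul_comp, Category.assoc, mul_add, add_mul, one_mul,
    mul_one, Int.negOnePow_add, Int.negOnePow_one]
  have e1 : n.negOnePow * -1 * ((n * i₁).negOnePow * n.negOnePow) = - (n * i₁).negOnePow := by
    rw [mul_comm (n * i₁).negOnePow, ← mul_assoc, mul_assoc n.negOnePow, neg_one_mul, mul_neg,
      Int.units_mul_self, neg_one_mul]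
  have e2 : n.negOnePow * -1 * (i₁.negOnePow * (n * i₁).negOnePow) =
      (n * i₁).negOnePow * i₁.negOnePow * (n.negOnePow * -1) := by
    rw [mul_comm, mul_comm i₁.negOnePow]
  rw [e1, e2, Units.neg_smul]
  abel

variable [HasBinaryBiproducts C₂] [HasBinaryBiproducts D] in
/-- compat with cones -/
noncomputable def wlCone (f : K ⟶ L) [HasMapBifunctor B (mappingCone f) F (ComplexShape.up ℤ)] :
    mappingCone (mapBifunctorMap (𝟙 B) f F (ComplexShape.up ℤ)) ≅
      mapBifunctor B (mappingCone f) F (ComplexShape.up ℤ) where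
  hom := mappingCone.desc _ (wl F B (mappingCone.inl f))
    (mapBifunctorMap (𝟙 B) (mappingCone.inr f) F (ComplexShape.up ℤ)) (by
      rw [wl_δ F B (by simp), mappingCone.δ_inl, Cochain.ofHom_comp, wl_comp, wl_ofHom, wl_ofHom,
        Cochain.ofHom_comp])
  inv := mappingCone.lift _ (Cocycle.mk (wl F B (mappingCone.fst f).1) 2 (by simp) (by
      rw [wl_δ F B (by simp), Cocycle.δ_eq_zero, wl_zero])) (wl F B (mappingCone.snd f)) (by
      rw [wl_δ F B (by simp), mappingCone.δ_snd, wl_neg, wl_comp, wl_ofHom]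
      simp)
  hom_inv_id := by
    have e1 := (wl_comp F B _ _ _).symm.trans (congrArg (wl F B) (mappingCone.inl_fst f))
    have e2 := (wl_comp F B _ _ _).symm.trans (congrArg (wl F B) (mappingCone.inl_snd f))
    have e3 := (wl_comp F B _ _ _).symm.trans (congrArg (wl F B) (mappingCone.inr_fst f))
    have e4 := (wl_comp F B _ _ _).symm.trans (congrArg (wl F B) (mappingCone.inr_snd f))
    simp only [wl_ofHom, wl_zero, wl_mapId] at e1 e2 e3 e4
    ext n : 1
    apply mappingCone.ext_from _ (n + 1) n rfl
    · apply mappingCone.ext_to _ n (n + 1) rfl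
      · have := Cochain.congr_v e1 (n + 1) (n + 1) (add_zero _)
        rw [Cochain.comp_v _ _ _ (n + 1) n (n + 1) (by omega) (by omega)] at this
        simpa using this
      · have := Cochain.congr_v e2 (n + 1) n (by omega)
        rw [Cochain.comp_v _ _ _ (n + 1) n n (by omega) (by omega)] at this
        simpa using this
    · apply mappingCone.ext_to _ n (n + 1) rfl
      · have := Cochain.congr_v e3 n (n + 1) (by omega)
        rw [Cochain.comp_v _ _ _ n n (n + 1) (by omega) (by omega)] at this
        simpa using this
      · have := Cochain.congr_v e4 n n (by omega)
        rw [Cochain.comp_v _ _ _ n n n (by omega) (by omega)] at this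
        simpa using this
  inv_hom_id := by
    have e := congrArg (wl F B) (mappingCone.id f)
    rw [wl_add, wl_comp, wl_comp, wl_ofHom, wl_ofHom, wl_mapId] at e
    ext n : 1
    rw [HomologicalComplex.comp_f, mappingCone.lift_desc_f _ _ _ _ _ _ _ n (n + 1) rfl]
    have := Cochain.congr_v e n n (add_zero _)
    rw [Cochain.add_v, Cochain.comp_v _ _ _ n (n + 1) n (by omega) (by omega)] at this
    simpa using this

/-- Homotopy equivalences -/
noncomputable def wlEquiv (e : HomotopyEquiv K L) :
    HomotopyEquiv (mapBifunctor B K F (ComplexShape.up ℤ))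
      (mapBifunctor B L F (ComplexShape.up ℤ)) where
  hom := mapBifunctorMap (𝟙 B) e.hom F _
  inv := mapBifunctorMap (𝟙 B) e.inv F _
  homotopyHomInvId := (Homotopy.ofEq (by ext; simp)).trans
    ((mapBifunctorMapHomotopy₂ (𝟙 B) e.homotopyHomInvId F (ComplexShape.up ℤ)).trans
      (Homotopy.ofEq (by ext; simp)))
  homotopyInvHomId := (Homotopy.ofEq (by ext; simp)).trans
    ((mapBifunctorMapHomotopy₂ (𝟙 B) e.homotopyInvHomId F (ComplexShape.up ℤ)).trans
      (Homotopy.ofEq (by ext; simp)))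

lemma wl_isZero [HasZeroObject D] [HasZeroObject C₁] [HasZeroObject C₂] (m d : ℤ) (hB : ∀ i : ℤ, i < m → IsZero (B.X i))
    (hK : ∀ i : ℤ, i < d → IsZero (K.X i)) (n : ℤ) (hn : n < m + d) :
    IsZero ((mapBifunctor B K F (ComplexShape.up ℤ)).X n) := by
  rw [IsZero.iff_id_eq_zero]
  apply mapBifunctor.hom_ext
  intro i₁ i₂ h
  have h' : i₁ + i₂ = n := h
  refine IsZero.eq_of_src ?_ _ _
  by_cases hi : i₁ < m
  · exact ((Functor.map_isZero F (hB _ hi)).obj (K.X i₂))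
  · exact Functor.map_isZero _ (hK _ (by omega))
end WL

/-- Lemma 2.6 of [MWGI].  Tensoring with a bounded-below complex `B`
commutes with limits of inverse systems: if `A∞` (with structure maps `ft k`) is a limit
of the inverse system `{A_k, f_k}`, then `B ⊗ A∞`, with the maps `id_B ⊗ ft k`, is a
limit of the inverse system `{B ⊗ A_k, id_B ⊗ f_k}`. -/
theorem tensor_systemLimit (B : Cx R) (m : ℤ) (hB : ∀ i : ℤ, i < m → IsZero (B.X i))
    (A : ℕ → Cx R) (f : ∀ k : ℕ, A (k + 1) ⟶ A k)
    (Ainf : Cx R) (ft : ∀ k : ℕ, Ainf ⟶ A k)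
    (hAlim : IsSystemLimit A f Ainf ft) :
    IsSystemLimit (fun k : ℕ => B ⊗ A k) (fun k : ℕ => B ◁ f k)
      (B ⊗ Ainf) (fun k : ℕ => B ◁ ft k) := by
  obtain ⟨h1, h2⟩ := hAlim
  refine ⟨fun k => ?_, fun d => ?_⟩
  · change B ◁ ft (k + 1) ≫ B ◁ f k = B ◁ ft k
    rw [← MonoidalCategory.whiskerLeft_comp, h1]
  · obtain ⟨N, hN⟩ := h2 (d - m)
    refine ⟨N, fun k hk => ?_⟩
    obtain ⟨C, ⟨e⟩, hC⟩ := hN k hk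
    refine ⟨B ⊗ C, ⟨?_⟩, fun i hi => ?_⟩
    · exact (HomotopyEquiv.ofIso (wlCone (curriedTensor (ModuleCat R)) B (ft k))).trans
        (wlEquiv (curriedTensor (ModuleCat R)) B e)
    · exact wl_isZero (curriedTensor (ModuleCat R)) B m (d - m) hB hC i (by omega)

end Monoidal
end

section
/- Let R be a commutative ring, let B be a cochain complex of R-modules with B^i = 0 for all i < m, and let f : A → A' be a chain map of cochain complexes of R-modules with homological order |f|_h ≥ d. Then the induced map id_B ⊗ f : B ⊗ A → B ⊗ A' has homological order |id_B ⊗ f|_h ≥ d + m. (Tensoring with a bounded-below complex preserves homological orders up to the bound shift.) -/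
open CategoryTheory CategoryTheory.Limits MonoidalCategory

namespace HomOrderAux

open HomologicalComplex

variable {C₁ C₂ D : Type*} [Category* C₁] [Category* C₂] [Category* D]
  [Preadditive C₁] [Preadditive C₂] [Preadditive D]
  (F : C₁ ⥤ C₂ ⥤ D) [F.Additive] [∀ X₁, (F.obj X₁).Additive]
  (B : CochainComplex C₁ ℤ) {A A' : CochainComplex C₂ ℤ} (f : A ⟶ A')

lemma map_comp' {A A' A'' : CochainComplex C₂ ℤ} (f : A ⟶ A') (g : A' ⟶ A'')
    [HasMapBifunctor B A F (ComplexShape.up ℤ)] [HasMapBifunctor B A' F (ComplexShape.up ℤ)]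
    [HasMapBifunctor B A'' F (ComplexShape.up ℤ)] :
    mapBifunctorMap (𝟙 B) f F (ComplexShape.up ℤ) ≫ mapBifunctorMap (𝟙 B) g F (ComplexShape.up ℤ) =
      mapBifunctorMap (𝟙 B) (f ≫ g) F (ComplexShape.up ℤ) := by
  ext n p q h
  simp

lemma map_id' {A : CochainComplex C₂ ℤ}
    [HasMapBifunctor B A F (ComplexShape.up ℤ)] :
    mapBifunctorMap (𝟙 B) (𝟙 A) F (ComplexShape.up ℤ) = 𝟙 _ := by
  ext n p q h
  simp

lemma map_zero' {A A' : CochainComplex C₂ ℤ}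
    [HasMapBifunctor B A F (ComplexShape.up ℤ)] [HasMapBifunctor B A' F (ComplexShape.up ℤ)] :
    mapBifunctorMap (𝟙 B) (0 : A ⟶ A') F (ComplexShape.up ℤ) = 0 := by
  ext n p q h
  simp

/-- Tensoring preserves homotopy equivalences. -/
noncomputable def mapHE {A A' : CochainComplex C₂ ℤ}
    [HasMapBifunctor B A F (ComplexShape.up ℤ)] [HasMapBifunctor B A' F (ComplexShape.up ℤ)]
    (e : HomotopyEquiv A A') :
    HomotopyEquiv (mapBifunctor B A F (ComplexShape.up ℤ))
      (mapBifunctor B A' F (ComplexShape.up ℤ)) where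
  hom := mapBifunctorMap (𝟙 B) e.hom F _
  inv := mapBifunctorMap (𝟙 B) e.inv F _
  homotopyHomInvId := (Homotopy.ofEq (map_comp' F B _ _)).trans
    ((mapBifunctorMapHomotopy₂ (𝟙 B) e.homotopyHomInvId F _).trans (Homotopy.ofEq (map_id' F B)))
  homotopyInvHomId := (Homotopy.ofEq (map_comp' F B _ _)).trans
    ((mapBifunctorMapHomotopy₂ (𝟙 B) e.homotopyInvHomId F _).trans (Homotopy.ofEq (map_id' F B)))

lemma isZero_X {A : CochainComplex C₂ ℤ} [HasMapBifunctor B A F (ComplexShape.up ℤ)]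
    (m d : ℤ) (hB : ∀ i, i < m → IsZero (B.X i)) (hA : ∀ i, i < d → IsZero (A.X i))
    (i : ℤ) (hi : i < d + m) : IsZero ((mapBifunctor B A F (ComplexShape.up ℤ)).X i) := by
  rw [IsZero.iff_id_eq_zero]
  ext p q h
  have h' : p + q = i := h
  apply IsZero.eq_of_src
  by_cases hp : p < m
  · rw [IsZero.iff_id_eq_zero]
    have : 𝟙 (B.X p) = 0 := (hB p hp).eq_of_src _ _
    have h2 : (F.map (𝟙 (B.X p))).app (A.X q) = 0 := by rw [this]; simp
    simpa using h2
  · exact (F.obj (B.X p)).map_isZero (hA q (by lia))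

section Cofiber

variable {V : Type*} [Category* V] [Preadditive V] {K L M : CochainComplex V ℤ} (g : K ⟶ L)
  [HasHomotopyCofiber g]

/-- The left inclusion. -/
noncomputable def cinl (n : ℤ) : K.X (n + 1) ⟶ (homotopyCofiber g).X n :=
  homotopyCofiber.inlX g (n + 1) n (by simp)

/-- The first projection. -/
noncomputable def cfst (n : ℤ) : (homotopyCofiber g).X n ⟶ K.X (n + 1) :=
  homotopyCofiber.fstX g n (n + 1) (by simp)

/-- The second projection. -/
noncomputable def csnd (n : ℤ) : (homotopyCofiber g).X n ⟶ L.X n :=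
  homotopyCofiber.sndX g n

lemma cinl_cfst (n : ℤ) : cinl g n ≫ cfst g n = 𝟙 _ := homotopyCofiber.inlX_fstX g _ _ _

lemma cinl_csnd (n : ℤ) : cinl g n ≫ csnd g n = 0 := homotopyCofiber.inlX_sndX g _ _ _

lemma cinr_cfst (n : ℤ) : (homotopyCofiber.inr g).f n ≫ cfst g n = 0 :=
  homotopyCofiber.inrX_fstX g _ _ _

lemma cinr_csnd (n : ℤ) : (homotopyCofiber.inr g).f n ≫ csnd g n = 𝟙 _ :=
  homotopyCofiber.inrX_sndX g _

lemma cext (n : ℤ) {Z : V} {a b : (homotopyCofiber g).X n ⟶ Z}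
    (h₁ : cinl g n ≫ a = cinl g n ≫ b)
    (h₂ : (homotopyCofiber.inr g).f n ≫ a = (homotopyCofiber.inr g).f n ≫ b) : a = b :=
  homotopyCofiber.ext_from_X g (n + 1) n (by simp) h₁ h₂

lemma cid (n : ℤ) : cfst g n ≫ cinl g n + csnd g n ≫ (homotopyCofiber.inr g).f n = 𝟙 _ := by
  apply cext g n
  · rw [Preadditive.comp_add, ← Category.assoc, ← Category.assoc, cinl_cfst, cinl_csnd]; simp
  · rw [Preadditive.comp_add, ← Category.assoc, ← Category.assoc, cinr_cfst, cinr_csnd]; simp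

lemma cinl_desc (α : L ⟶ M) (h : Homotopy (g ≫ α) 0) (n : ℤ) :
    cinl g n ≫ (homotopyCofiber.desc g α h).f n = h.hom (n + 1) n :=
  homotopyCofiber.inlX_desc_f g α h _ _ _

lemma cinr_desc (α : L ⟶ M) (h : Homotopy (g ≫ α) 0) (n : ℤ) :
    (homotopyCofiber.inr g).f n ≫ (homotopyCofiber.desc g α h).f n = α.f n :=
  homotopyCofiber.inrX_desc_f g α h _

end Cofiber

variable [HasHomotopyCofiber f] [HasMapBifunctor B A F (ComplexShape.up ℤ)]
  [HasMapBifunctor B A' F (ComplexShape.up ℤ)]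
  [HasMapBifunctor B (homotopyCofiber f) F (ComplexShape.up ℤ)]
  [HasHomotopyCofiber (mapBifunctorMap (𝟙 B) f F (ComplexShape.up ℤ))]

/-- The null homotopy of `(B ⊗ f) ≫ (B ⊗ inr)`. -/
noncomputable def nullH : Homotopy (mapBifunctorMap (𝟙 B) f F (ComplexShape.up ℤ) ≫
    mapBifunctorMap (𝟙 B) (homotopyCofiber.inr f) F (ComplexShape.up ℤ)) 0 :=
  (Homotopy.ofEq (map_comp' F B _ _)).trans
    ((mapBifunctorMapHomotopy₂ (𝟙 B) (homotopyCofiber.inrCompHomotopy f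
      (fun j => ⟨j - 1, by simp⟩)) F _).trans (Homotopy.ofEq (map_zero' F B)))

lemma ι_nullH (p q n n' : ℤ) (h : p + (q + 1) = n') (hn : n + 1 = n') :
    ιMapBifunctor B A F (ComplexShape.up ℤ) p (q + 1) n' h ≫ (nullH F B f).hom n' n =
    ComplexShape.ε₂ (ComplexShape.up ℤ) (ComplexShape.up ℤ) (ComplexShape.up ℤ) (p, q) •
      (F.obj (B.X p)).map (cinl f q) ≫
        ιMapBifunctor B (homotopyCofiber f) F (ComplexShape.up ℤ) p q n
          (show p + q = n by lia) := by
  simp only [nullH, Homotopy.trans_hom, Homotopy.ofEq_hom, Pi.zero_apply, zero_add, add_zero]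
  refine (mapBifunctorMapHomotopy.ιMapBifunctor_hom₂ (𝟙 B) _ F _ p q (q + 1) n' n h
    (by simp)).trans ?_
  rw [ιMapBifunctorOrZero_eq _ _ _ _ _ _ _ (show p + q = n by lia),
    homotopyCofiber.inrCompHomotopy_hom _ _ _ _ (by simp)]
  simp [cinl]

/-- The comparison map. -/
noncomputable def T : homotopyCofiber (mapBifunctorMap (𝟙 B) f F (ComplexShape.up ℤ)) ⟶
    mapBifunctor B (homotopyCofiber f) F (ComplexShape.up ℤ) :=
  homotopyCofiber.desc _ _ (nullH F B f)

/-- The degreewise inverse of the comparison map. -/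
noncomputable def S (n : ℤ) : (mapBifunctor B (homotopyCofiber f) F (ComplexShape.up ℤ)).X n ⟶
    (homotopyCofiber (mapBifunctorMap (𝟙 B) f F (ComplexShape.up ℤ))).X n :=
  mapBifunctorDesc (fun p q h =>
    ComplexShape.ε₂ (ComplexShape.up ℤ) (ComplexShape.up ℤ) (ComplexShape.up ℤ) (p, q) •
      (F.obj (B.X p)).map (cfst f q) ≫
        ιMapBifunctor B A F (ComplexShape.up ℤ) p (q + 1) (n + 1)
          (show p + (q + 1) = n + 1 by have : p + q = n := h
                                       lia) ≫
        cinl (mapBifunctorMap (𝟙 B) f F (ComplexShape.up ℤ)) n +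
      (F.obj (B.X p)).map (csnd f q) ≫
        ιMapBifunctor B A' F (ComplexShape.up ℤ) p q n h ≫
        (homotopyCofiber.inr (mapBifunctorMap (𝟙 B) f F (ComplexShape.up ℤ))).f n)

lemma ι_S (n p q : ℤ) (h : p + q = n) :
  ιMapBifunctor B (homotopyCofiber f) F (ComplexShape.up ℤ) p q n h ≫ S F B f n =
    ComplexShape.ε₂ (ComplexShape.up ℤ) (ComplexShape.up ℤ) (ComplexShape.up ℤ) (p, q) •
      (F.obj (B.X p)).map (cfst f q) ≫
        ιMapBifunctor B A F (ComplexShape.up ℤ) p (q + 1) (n + 1)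
          (show p + (q + 1) = n + 1 by lia) ≫
        cinl (mapBifunctorMap (𝟙 B) f F (ComplexShape.up ℤ)) n +
      (F.obj (B.X p)).map (csnd f q) ≫
        ιMapBifunctor B A' F (ComplexShape.up ℤ) p q n h ≫
        (homotopyCofiber.inr (mapBifunctorMap (𝟙 B) f F (ComplexShape.up ℤ))).f n :=
  ι_mapBifunctorDesc _ _ _ _

lemma T_S (n : ℤ) : (T F B f).f n ≫ S F B f n = 𝟙 _ := by
  apply cext
  · rw [Category.comp_id, T, ← Category.assoc, cinl_desc]
    ext p q' h
    have h' : p + q' = n + 1 := h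
    obtain ⟨q, rfl⟩ : ∃ q, q' = q + 1 := ⟨q' - 1, by lia⟩
    rw [← Category.assoc, ι_nullH F B f p q n (n + 1) h rfl, Linear.units_smul_comp,
      Category.assoc, ι_S F B f n p q (by lia), Preadditive.comp_add, Linear.comp_units_smul,
      ← Functor.map_comp_assoc, ← Functor.map_comp_assoc, cinl_cfst, cinl_csnd]
    simp [smul_smul]
  · rw [Category.comp_id, T, ← Category.assoc, cinr_desc]
    ext p q h
    rw [← Category.assoc, ι_mapBifunctorMap]
    simp only [Category.assoc]
    rw [ι_S F B f n p q h, Preadditive.comp_add, Linear.comp_units_smul,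
      ← Functor.map_comp_assoc, ← Functor.map_comp_assoc, cinr_cfst, cinr_csnd]
    simp

lemma S_T (n : ℤ) : S F B f n ≫ (T F B f).f n = 𝟙 _ := by
  ext p q h
  rw [← Category.assoc, ι_S F B f n p q h, Preadditive.add_comp, Linear.units_smul_comp, T]
  simp only [Category.assoc]
  rw [cinl_desc, cinr_desc, ι_nullH F B f p q n (n + 1) _ rfl, ι_mapBifunctorMap]
  simp only [Linear.comp_units_smul, smul_smul, Int.units_mul_self, one_smul]
  rw [← Functor.map_comp_assoc]
  simp only [id_f, CategoryTheory.Functor.map_id, NatTrans.id_app, Category.id_comp, Category.comp_id]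
  rw [← Functor.map_comp_assoc, ← Preadditive.add_comp, ← Functor.map_add, cid,
    CategoryTheory.Functor.map_id]
  exact Category.id_comp _

/-- The comparison isomorphism between the cone of `B ⊗ f` and `B ⊗ cone f`. -/
noncomputable def coneIso :
    homotopyCofiber (mapBifunctorMap (𝟙 B) f F (ComplexShape.up ℤ)) ≅
    mapBifunctor B (homotopyCofiber f) F (ComplexShape.up ℤ) :=
  Hom.isoOfComponents (fun n => ⟨(T F B f).f n, S F B f n, T_S F B f n, S_T F B f n⟩)
    (fun i j _ => (T F B f).comm i j)

end HomOrderAux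

section Monoidal

variable {R : Type} [CommRing R]

set_option synthInstance.maxHeartbeats 1000000
set_option maxHeartbeats 1000000

/-- Tensoring with a complex `B` that vanishes in degrees `< m`
shifts lower bounds on homological orders by `m`:  if `|f|_h ≥ d` then
`|id_B ⊗ f|_h ≥ d + m`. -/
theorem homOrder_whiskerLeft (B : Cx R) (m : ℤ) (hB : ∀ i : ℤ, i < m → IsZero (B.X i))
    {A A' : Cx R} (f : A ⟶ A') (d : ℤ) (hf : homOrderGE f d) :
    homOrderGE (B ◁ f) (d + m) := by
  obtain ⟨C, ⟨e⟩, hC⟩ := hf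
  refine ⟨HomologicalComplex.mapBifunctor B C (curriedTensor (ModuleCat R)) (ComplexShape.up ℤ),
    ⟨(HomotopyEquiv.ofIso (HomOrderAux.coneIso (curriedTensor (ModuleCat R)) B f)).trans
      (HomOrderAux.mapHE (curriedTensor (ModuleCat R)) B e)⟩, ?_⟩
  exact HomOrderAux.isZero_X (curriedTensor (ModuleCat R)) B m d hB hC

end Monoidal
end
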